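/- For r ≥ 0 define dist(ω*, r) = sup{ max(‖ω − ω*‖_∞, |I − I*|) : ω ∈ ℝ_{≥0}^K, I ∈ ℝ, and there exists η ∈ [−r, r]^K with Ψ(ω, I, η) = 0 }. Then: (1) dist(ω*, 0) = 0; (2) r ↦ dist(ω*, r) is non-decreasing; (3) lim_{r→0+} dist(ω*, r) = 0. -/

import Mathlib

open scoped BigOperators

/-- A single-parameter exponential family, given by the log-partition function `b`,
smooth with positive second derivative on an open interval `Θ`, together with the
inverse `θof` of `b'` on the set of means `S = b'(Θ)`. -/
structure SPEF where
  Θ : Set ℝ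
  Θ_isOpen : IsOpen Θ
  Θ_ordConnected : Set.OrdConnected Θ
  Θ_nonempty : Θ.Nonempty
  b : ℝ → ℝ
  b_smooth : ContDiffOn ℝ (⊤ : ℕ∞) b Θ
  b_conv : ∀ t ∈ Θ, 0 < iteratedDeriv 2 b t
  θof : ℝ → ℝ
  θof_mem : ∀ μ ∈ deriv b '' Θ, θof μ ∈ Θ
  θof_spec : ∀ μ ∈ deriv b '' Θ, deriv b (θof μ) = μ

namespace SPEF

/-- The set of means of the family. -/
def S (F : SPEF) : Set ℝ := deriv F.b '' F.Θ

/-- KL divergence `d(μ, x)` between the members of the family with means `μ` and `x`. -/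
noncomputable def d (F : SPEF) (μ x : ℝ) : ℝ :=
  (F.θof μ - F.θof x) * μ - F.b (F.θof μ) + F.b (F.θof x)

end SPEF

/-- A `K`-armed bandit instance with arm distributions in a fixed SPEF; arm `0`
(the paper's arm `1`) is the unique best arm. -/
structure Bandit (K : ℕ) [NeZero K] extends SPEF where
  two_le : 2 ≤ K
  μ : Fin K → ℝ
  μ_mem : ∀ a, μ a ∈ SPEF.S toSPEF
  μ_best : ∀ a : Fin K, a ≠ 0 → μ a < μ 0

namespace Bandit

variable {K : ℕ} [NeZero K]

/-- KL divergence of the underlying family. -/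
noncomputable def d (M : Bandit K) : ℝ → ℝ → ℝ := M.toSPEF.d

/-- The weighted mean `x_{1,a}(N₁, N_a)`. -/
noncomputable def x1 (M : Bandit K) (a : Fin K) (N1 Na : ℝ) : ℝ :=
  (N1 * M.μ 0 + Na * M.μ a) / (N1 + Na)

/-- The index `W_a(N₁, N_a)` of an arm `a ≠ 1`. -/
noncomputable def W (M : Bandit K) (a : Fin K) (N1 Na : ℝ) : ℝ :=
  N1 * M.d (M.μ 0) (M.x1 a N1 Na) + Na * M.d (M.μ a) (M.x1 a N1 Na)

/-- The set `{2, …, K}` of suboptimal arms. -/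
def alt (K : ℕ) [NeZero K] : Finset (Fin K) := Finset.univ.filter (fun a => a ≠ 0)

/-- The anchor function `g(μ, N)`. -/
noncomputable def g (M : Bandit K) (Nv : Fin K → ℝ) : ℝ :=
  (∑ a ∈ alt K, M.d (M.μ 0) (M.x1 a (Nv 0) (Nv a)) / M.d (M.μ a) (M.x1 a (Nv 0) (Nv a))) - 1

end Bandit

open Bandit

/-- The perturbed optimality system `Ψ(ω, I, η) = 0`: the anchor equation perturbed by
`η 0`, the index equations perturbed by `η a`, and the simplex constraint. -/
def PsiZero {K : ℕ} [NeZero K] (M : Bandit K) (ω : Fin K → ℝ) (I : ℝ)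
    (η : Fin K → ℝ) : Prop :=
  M.g ω - η 0 = 0 ∧ (∀ a ∈ alt K, M.W a (ω 0) (ω a) - I - η a = 0) ∧
    (∑ a, ω a) - 1 = 0

/-- The maximal distance `dist(ω*, r)` from `(ω*, I*)` of solutions of the perturbed
system with perturbations of size at most `r`. -/
noncomputable def distFn {K : ℕ} [NeZero K] (M : Bandit K)
    (ωstar : Fin K → ℝ) (Istar : ℝ) (r : ℝ) : ℝ :=
  sSup {v : ℝ | ∃ (ω : Fin K → ℝ) (I : ℝ) (η : Fin K → ℝ),
    (∀ a, 0 ≤ ω a) ∧ (∀ a, |η a| ≤ r) ∧ PsiZero M ω I η ∧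
    v = max ‖ω - ωstar‖ |I - Istar|}

namespace SPEF

open Filter Topology

variable (F : SPEF)

lemma contDiffAt_b {t : ℝ} (ht : t ∈ F.Θ) : ContDiffAt ℝ (⊤ : ℕ∞) F.b t :=
  F.b_smooth.contDiffAt (F.Θ_isOpen.mem_nhds ht)

lemma hasStrictDerivAt_deriv_b {t : ℝ} (ht : t ∈ F.Θ) :
    HasStrictDerivAt (deriv F.b) (iteratedDeriv 2 F.b t) t := by
  have h : ContDiffAt ℝ 1 (deriv F.b) t :=
    ((F.b_smooth.deriv_of_isOpen F.Θ_isOpen (m := 1) (by norm_cast)).contDiffAt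
      (F.Θ_isOpen.mem_nhds ht))
  have h' := h.hasStrictDerivAt one_ne_zero
  rwa [iteratedDeriv_succ, iteratedDeriv_one]

lemma strictMonoOn_deriv_b : StrictMonoOn (deriv F.b) F.Θ := by
  refine strictMonoOn_of_deriv_pos F.Θ_ordConnected.convex
    (fun t ht => (F.hasStrictDerivAt_deriv_b ht).hasDerivAt.continuousAt.continuousWithinAt)
    fun t ht => ?_
  have ht' := interior_subset ht
  rw [(F.hasStrictDerivAt_deriv_b ht').hasDerivAt.deriv]
  exact F.b_conv t ht'

lemma strictConvexOn_b : StrictConvexOn ℝ F.Θ F.b :=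
  (F.strictMonoOn_deriv_b.mono interior_subset).strictConvexOn_of_deriv F.Θ_ordConnected.convex
    F.b_smooth.continuousOn

lemma θof_deriv_b {t : ℝ} (ht : t ∈ F.Θ) : F.θof (deriv F.b t) = t :=
  F.strictMonoOn_deriv_b.injOn (F.θof_mem _ ⟨t, ht, rfl⟩) ht (F.θof_spec _ ⟨t, ht, rfl⟩)

lemma ordConnected_S : F.S.OrdConnected :=
  (F.Θ_ordConnected.isPreconnected.image _ fun _ ht =>
    (F.hasStrictDerivAt_deriv_b ht).hasDerivAt.continuousAt.continuousWithinAt).ordConnected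

lemma continuousAt_θof {x : ℝ} (hx : x ∈ F.S) : ContinuousAt F.θof x := by
  obtain ⟨t, ht, rfl⟩ := hx
  rw [ContinuousAt, F.θof_deriv_b ht,
    ← (F.hasStrictDerivAt_deriv_b ht).map_nhds_eq (F.b_conv t ht).ne', tendsto_map'_iff]
  refine tendsto_id.congr' ?_
  filter_upwards [F.Θ_isOpen.mem_nhds ht] with s hs using (F.θof_deriv_b hs).symm

lemma continuousAt_d (μ : ℝ) {x : ℝ} (hx : x ∈ F.S) : ContinuousAt (F.d μ) x := by
  have hθ := F.continuousAt_θof hx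
  have hb : ContinuousAt (fun y => F.b (F.θof y)) x :=
    ContinuousAt.comp (F.contDiffAt_b (F.θof_mem x hx)).continuousAt hθ
  exact (((continuousAt_const.sub hθ).mul continuousAt_const).sub continuousAt_const).add hb

@[simp]
lemma d_self (μ : ℝ) : F.d μ μ = 0 := by
  simp [d]

lemma d_pos {μ x : ℝ} (hμ : μ ∈ F.S) (hx : x ∈ F.S) (hne : μ ≠ x) : 0 < F.d μ x := by
  obtain ⟨s, hs, rfl⟩ := hμ
  obtain ⟨t, ht, rfl⟩ := hx
  have hst : s ≠ t := fun h => hne (h ▸ rfl)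
  have hdiff : DifferentiableAt ℝ F.b s := (F.contDiffAt_b hs).differentiableAt (by simp)
  rw [d, F.θof_deriv_b hs, F.θof_deriv_b ht]
  rcases hst.lt_or_gt with h | h
  · have := F.strictConvexOn_b.lt_slope_of_hasDerivAt hs ht h hdiff.hasDerivAt
    rw [slope_def_field, lt_div_iff₀ (sub_pos.2 h)] at this
    linarith
  · have := F.strictConvexOn_b.slope_lt_of_hasDerivAt ht hs h hdiff.hasDerivAt
    rw [slope_def_field, div_lt_iff₀ (sub_pos.2 h)] at this
    linarith

lemma d_nonneg {μ x : ℝ} (hμ : μ ∈ F.S) (hx : x ∈ F.S) : 0 ≤ F.d μ x := by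
  rcases eq_or_ne μ x with rfl | h
  · simp
  · exact (F.d_pos hμ hx h).le

end SPEF

namespace Bandit

open Filter Topology

variable {K : ℕ} [NeZero K] (M : Bandit K)

lemma mem_alt {a : Fin K} : a ∈ alt K ↔ a ≠ 0 := by
  simp [alt]

lemma alt_nonempty (M : Bandit K) : (alt K).Nonempty :=
  ⟨⟨1, M.two_le⟩, mem_alt.2 fun h => by simpa using congrArg Fin.val h⟩

lemma x1_mem_Icc {a : Fin K} (ha : a ≠ 0) {p q : ℝ} (hp : 0 ≤ p) (hq : 0 ≤ q) (hpq : 0 < p + q) :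
    M.x1 a p q ∈ Set.Icc (M.μ a) (M.μ 0) := by
  have := M.μ_best a ha
  rw [x1, Set.mem_Icc, le_div_iff₀ hpq, div_le_iff₀ hpq]
  constructor <;> nlinarith

lemma lt_x1 {a : Fin K} (ha : a ≠ 0) {p q : ℝ} (hp : 0 < p) (hq : 0 ≤ q) :
    M.μ a < M.x1 a p q := by
  have := M.μ_best a ha
  rw [x1, lt_div_iff₀ (by positivity)]
  nlinarith

lemma Icc_subset_S (a : Fin K) : Set.Icc (M.μ a) (M.μ 0) ⊆ M.toSPEF.S :=
  M.toSPEF.ordConnected_S.out (M.μ_mem a) (M.μ_mem 0)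

lemma x1_mem_S {a : Fin K} (ha : a ≠ 0) {p q : ℝ} (hp : 0 ≤ p) (hq : 0 ≤ q) (hpq : 0 < p + q) :
    M.x1 a p q ∈ M.toSPEF.S :=
  M.Icc_subset_S a (M.x1_mem_Icc ha hp hq hpq)

lemma x1_zero_left (a : Fin K) {q : ℝ} (hq : q ≠ 0) : M.x1 a 0 q = M.μ a := by
  simp [x1, hq]

@[simp]
lemma d_self (μ : ℝ) : M.d μ μ = 0 := M.toSPEF.d_self μ

lemma d_x1_pos {a : Fin K} (ha : a ≠ 0) {p q : ℝ} (hp : 0 < p) (hq : 0 ≤ q) :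
    0 < M.d (M.μ a) (M.x1 a p q) :=
  M.toSPEF.d_pos (M.μ_mem a) (M.x1_mem_S ha hp.le hq (by positivity)) (M.lt_x1 ha hp hq).ne

lemma tendsto_d_x1 {α : Type*} {l : Filter α} {u v : α → ℝ} {p q : ℝ} (μ : ℝ) {a : Fin K}
    (ha : a ≠ 0) (hp : 0 ≤ p) (hq : 0 ≤ q) (hpq : 0 < p + q)
    (hu : Tendsto u l (𝓝 p)) (hv : Tendsto v l (𝓝 q)) :
    Tendsto (fun i => M.d μ (M.x1 a (u i) (v i))) l (𝓝 (M.d μ (M.x1 a p q))) :=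
  (M.toSPEF.continuousAt_d μ (M.x1_mem_S ha hp hq hpq)).tendsto.comp
    (((hu.mul_const _).add (hv.mul_const _)).div (hu.add hv) hpq.ne')

lemma tendsto_W {α : Type*} {l : Filter α} {u v : α → ℝ} {p q : ℝ} {a : Fin K}
    (ha : a ≠ 0) (hp : 0 < p) (hq : 0 ≤ q)
    (hu : Tendsto u l (𝓝 p)) (hv : Tendsto v l (𝓝 q)) :
    Tendsto (fun i => M.W a (u i) (v i)) l (𝓝 (M.W a p q)) :=
  (hu.mul (M.tendsto_d_x1 _ ha hp.le hq (by positivity) hu hv)).add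
    (hv.mul (M.tendsto_d_x1 _ ha hp.le hq (by positivity) hu hv))

lemma tendsto_g {α : Type*} {l : Filter α} {u : α → Fin K → ℝ} {ω : Fin K → ℝ}
    (hω : ∀ a, 0 ≤ ω a) (hpos : 0 < ω 0) (hu : Tendsto u l (𝓝 ω)) :
    Tendsto (fun i => M.g (u i)) l (𝓝 (M.g ω)) := by
  have hu' := tendsto_pi_nhds.1 hu
  refine (tendsto_finsetSum _ fun a ha => ?_).sub_const 1
  rw [mem_alt] at ha
  have hsum : 0 < ω 0 + ω a := add_pos_of_pos_of_nonneg hpos (hω a)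
  exact (M.tendsto_d_x1 _ ha hpos.le (hω a) hsum (hu' 0) (hu' a)).div
    (M.tendsto_d_x1 _ ha hpos.le (hω a) hsum (hu' 0) (hu' a))
    (M.d_x1_pos ha hpos (hω a)).ne'

/-- The index of a suboptimal arm is bounded on the unit square. -/
lemma exists_abs_W_le {a : Fin K} (ha : a ≠ 0) :
    ∃ B, ∀ p q : ℝ, 0 ≤ p → p ≤ 1 → 0 ≤ q → q ≤ 1 → |M.W a p q| ≤ B := by
  have hbdd : ∀ μ, ∃ C, ∀ x ∈ Set.Icc (M.μ a) (M.μ 0), ‖M.d μ x‖ ≤ C := fun μ =>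
    isCompact_Icc.exists_bound_of_continuousOn fun x hx =>
      (M.toSPEF.continuousAt_d μ (M.Icc_subset_S a hx)).continuousWithinAt
  obtain ⟨C, hC⟩ := hbdd (M.μ 0)
  obtain ⟨D, hD⟩ := hbdd (M.μ a)
  have hmem := Set.left_mem_Icc.2 (M.μ_best a ha).le
  have hC0 : 0 ≤ C := (norm_nonneg _).trans (hC _ hmem)
  have hD0 : 0 ≤ D := (norm_nonneg _).trans (hD _ hmem)
  refine ⟨C + D, fun p q hp hp1 hq hq1 => ?_⟩
  rcases (add_nonneg hp hq).eq_or_lt' with h | h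
  · have hp0 : p = 0 := by linarith
    have hq0 : q = 0 := by linarith
    simpa [W, hp0, hq0] using add_nonneg hC0 hD0
  · have hx := M.x1_mem_Icc ha hp hq h
    have h1 := hC _ hx
    have h2 := hD _ hx
    rw [Real.norm_eq_abs] at h1 h2
    refine (abs_add_le _ _).trans (add_le_add ?_ ?_)
    · rw [abs_mul, abs_of_nonneg hp]
      exact (mul_le_of_le_one_left (abs_nonneg _) hp1).trans h1
    · rw [abs_mul, abs_of_nonneg hq]
      exact (mul_le_of_le_one_left (abs_nonneg _) hq1).trans h2

lemma W_zero_left (a : Fin K) (q : ℝ) : M.W a 0 q = 0 := by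
  rcases eq_or_ne q 0 with rfl | hq
  · simp [W]
  · simp [W, M.x1_zero_left a hq]

/-- On allocations that never pull the best arm the anchor function takes finitely many values. -/
lemma finite_g_of_zero : {y | ∃ ω : Fin K → ℝ, ω 0 = 0 ∧ M.g ω = y}.Finite := by
  classical
  refine (Set.finite_range fun A : Finset (Fin K) =>
    (∑ a ∈ alt K, if a ∈ A then M.d (M.μ 0) (M.x1 a 0 0) / M.d (M.μ a) (M.x1 a 0 0) else 0)
      - 1).subset ?_
  rintro _ ⟨ω, hω, rfl⟩
  refine ⟨Finset.univ.filter fun a => ω a = 0, ?_⟩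
  simp only [g, hω, Finset.mem_filter, Finset.mem_univ, true_and]
  congr 1
  refine Finset.sum_congr rfl fun a _ => ?_
  split_ifs with h
  · rw [h]
  · simp [M.x1_zero_left a h]

/-- A limit of allocations pulling the best arm, along which the anchor function is at most `1`,
pulls the best arm. -/
lemma limit_zero_ne_zero {u : ℕ → Fin K → ℝ} {ω : Fin K → ℝ} (hu : Tendsto u atTop (𝓝 ω))
    (hu0 : ∀ n a, 0 ≤ u n a) (hupos : ∀ n, 0 < u n 0) (hg : ∀ n, M.g (u n) ≤ 1)
    (hω : ∀ a, 0 ≤ ω a) (hsum : ∑ a, ω a = 1) : ω 0 ≠ 0 := by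
  intro h0
  obtain ⟨a, -, ha⟩ : ∃ a ∈ Finset.univ, ω a ≠ 0 :=
    Finset.exists_ne_zero_of_sum_ne_zero (by rw [hsum]; exact one_ne_zero)
  have ha0 : a ≠ 0 := fun h => ha (h ▸ h0)
  have hu' := tendsto_pi_nhds.1 hu
  have hpq : 0 < ω 0 + ω a := by
    rw [h0, zero_add]
    exact (hω a).lt_of_ne' ha
  have key : ∀ n, M.d (M.μ 0) (M.x1 a (u n 0) (u n a)) ≤
      2 * M.d (M.μ a) (M.x1 a (u n 0) (u n a)) := by
    intro n
    rw [← div_le_iff₀ (M.d_x1_pos ha0 (hupos n) (hu0 n a))]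
    have hterm := Finset.single_le_sum (s := alt K)
      (f := fun a => M.d (M.μ 0) (M.x1 a (u n 0) (u n a)) / M.d (M.μ a) (M.x1 a (u n 0) (u n a)))
      (fun c hc => div_nonneg
        (M.toSPEF.d_nonneg (M.μ_mem 0) (M.x1_mem_S (mem_alt.1 hc) (hu0 n 0) (hu0 n c)
          (add_pos_of_pos_of_nonneg (hupos n) (hu0 n c))))
        (M.d_x1_pos (mem_alt.1 hc) (hupos n) (hu0 n c)).le) (mem_alt.2 ha0)
    have := hg n
    rw [g] at this
    linarith
  have hlim := le_of_tendsto_of_tendsto'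
    (M.tendsto_d_x1 (M.μ 0) ha0 (hω 0) (hω a) hpq (hu' 0) (hu' a))
    ((M.tendsto_d_x1 (M.μ a) ha0 (hω 0) (hω a) hpq (hu' 0) (hu' a)).const_mul 2) key
  rw [h0, M.x1_zero_left a ha, d_self, mul_zero] at hlim
  exact hlim.not_gt (M.toSPEF.d_pos (M.μ_mem 0) (M.μ_mem a) (M.μ_best a ha0).ne')

end Bandit

open Filter Topology

section PerturbedSystem

variable {K : ℕ} [NeZero K] {M : Bandit K} {ωstar : Fin K → ℝ} {Istar : ℝ}

lemma PsiZero.mem_stdSimplex {ω : Fin K → ℝ} {I : ℝ} {η : Fin K → ℝ} (h : PsiZero M ω I η)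
    (hω : ∀ a, 0 ≤ ω a) : ω ∈ stdSimplex ℝ (Fin K) :=
  ⟨hω, sub_eq_zero.1 h.2.2⟩

lemma bddAbove_perturbed (M : Bandit K) (ωstar : Fin K → ℝ) (Istar r : ℝ) :
    BddAbove {v : ℝ | ∃ (ω : Fin K → ℝ) (I : ℝ) (η : Fin K → ℝ),
      (∀ a, 0 ≤ ω a) ∧ (∀ a, |η a| ≤ r) ∧ PsiZero M ω I η ∧
      v = max ‖ω - ωstar‖ |I - Istar|} := by
  obtain ⟨a, ha⟩ := M.alt_nonempty
  obtain ⟨B, hB⟩ := M.exists_abs_W_le (mem_alt.1 ha)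
  refine ⟨max (1 + ‖ωstar‖) (B + r + |Istar|), ?_⟩
  rintro _ ⟨ω, I, η, hω, hη, hΨ, rfl⟩
  have hle : ∀ c, ω c ≤ 1 := fun c =>
    (mem_Icc_of_mem_stdSimplex (hΨ.mem_stdSimplex hω) c).2
  refine max_le_max ((norm_sub_le _ _).trans (add_le_add_left ?_ _)) ?_
  · refine (pi_norm_le_iff_of_nonneg zero_le_one).2 fun c => ?_
    rw [Real.norm_eq_abs, abs_of_nonneg (hω c)]
    exact hle c
  · have hI : I = M.W a (ω 0) (ω a) - η a := by linarith [hΨ.2.1 a ha]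
    have hW := hB _ _ (hω 0) (hle 0) (hω a) (hle a)
    have h1 := abs_sub (M.W a (ω 0) (ω a)) (η a)
    rw [← hI] at h1
    linarith [abs_sub I Istar, hη a]

lemma exists_forall_perturbed_of_zero
    (huniq : ∀ (ω : Fin K → ℝ) (I : ℝ), (∀ a, 0 ≤ ω a) →
      PsiZero M ω I (fun _ => 0) → ω = ωstar ∧ I = Istar) {ε : ℝ} (hε : 0 < ε) :
    ∃ ρ > 0, ∀ (ω : Fin K → ℝ) (I : ℝ) (η : Fin K → ℝ), (∀ a, 0 ≤ ω a) → ω 0 = 0 →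
      (∀ a, |η a| < ρ) → PsiZero M ω I η → max ‖ω - ωstar‖ |I - Istar| < ε := by
  have hfin := M.finite_g_of_zero.subset (Set.sdiff_subset (t := {0}))
  obtain ⟨ρ, hρ, hball⟩ := Metric.mem_nhds_iff.1
    (hfin.isClosed.isOpen_compl.mem_nhds (show (0 : ℝ) ∈ _ from fun h => h.2 rfl))
  refine ⟨min ρ ε, lt_min hρ hε, fun ω I η hω h0 hη hΨ => ?_⟩
  have hg : M.g ω = η 0 := sub_eq_zero.1 hΨ.1
  have hg0 : M.g ω = 0 := by
    by_contra hne
    refine hball (a := M.g ω) ?_ ⟨⟨ω, h0, rfl⟩, hne⟩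
    rw [Metric.mem_ball, Real.dist_0_eq_abs, hg]
    exact (hη 0).trans_le (min_le_left _ _)
  obtain ⟨rfl, rfl⟩ := huniq ω 0 hω
    ⟨by rw [hg0, sub_zero], fun a _ => by simp [h0, M.W_zero_left], hΨ.2.2⟩
  obtain ⟨a, ha⟩ := M.alt_nonempty
  have hI := hΨ.2.1 a ha
  rw [h0, M.W_zero_left] at hI
  have hI' : I = -η a := by linarith
  rw [sub_self, norm_zero, sub_zero, hI', abs_neg]
  exact max_lt hε ((hη a).trans_le (min_le_right _ _))

lemma exists_forall_perturbed_of_pos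
    (huniq : ∀ (ω : Fin K → ℝ) (I : ℝ), (∀ a, 0 ≤ ω a) →
      PsiZero M ω I (fun _ => 0) → ω = ωstar ∧ I = Istar) {ε : ℝ} (hε : 0 < ε) :
    ∃ ρ > 0, ∀ (ω : Fin K → ℝ) (I : ℝ) (η : Fin K → ℝ), (∀ a, 0 ≤ ω a) → 0 < ω 0 →
      (∀ a, |η a| < ρ) → PsiZero M ω I η → max ‖ω - ωstar‖ |I - Istar| < ε := by
  by_contra! hcon
  choose u J η hu hupos hη hΨ hfar using fun n : ℕ =>
    hcon (1 / ((n : ℝ) + 1)) Nat.one_div_pos_of_nat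
  obtain ⟨ω, hω, φ, hφ, hlim⟩ := (isCompact_stdSimplex ℝ (Fin K)).tendsto_subseq
    fun n => (hΨ n).mem_stdSimplex (hu n)
  have hη0 : ∀ a, Tendsto (fun n => η (φ n) a) atTop (𝓝 0) := fun a =>
    (squeeze_zero_norm (f := fun n => η n a) (fun n => (hη n a).le)
      tendsto_one_div_add_atTop_nhds_zero_nat).comp hφ.tendsto_atTop
  have hgη : ∀ n, M.g (u n) = η n 0 := fun n => sub_eq_zero.1 (hΨ n).1
  have hpos : 0 < ω 0 := by
    refine (hω.1 0).lt_of_ne' (M.limit_zero_ne_zero hlim (fun n => hu _) (fun n => hupos _)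
      (fun n => ?_) hω.1 hω.2)
    rw [Function.comp_apply, hgη]
    refine (le_abs_self _).trans ((hη (φ n) 0).le.trans ?_)
    rw [div_le_one (by positivity)]
    linarith [(Nat.cast_nonneg (φ n) : (0 : ℝ) ≤ _)]
  have hlim' := tendsto_pi_nhds.1 hlim
  have hg : M.g ω = 0 := tendsto_nhds_unique (M.tendsto_g hω.1 hpos hlim)
    ((hη0 0).congr fun n => (hgη (φ n)).symm)
  have hJ : ∀ a ∈ alt K, Tendsto (fun n => J (φ n)) atTop (𝓝 (M.W a (ω 0) (ω a))) := by
    intro a ha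
    have := (M.tendsto_W (mem_alt.1 ha) hpos (hω.1 a) (hlim' 0) (hlim' a)).sub (hη0 a)
    rw [sub_zero] at this
    refine this.congr fun n => ?_
    simp only [Function.comp_apply]
    linarith [(hΨ (φ n)).2.1 a ha]
  obtain ⟨c, hc⟩ := M.alt_nonempty
  obtain ⟨hωs, hIs⟩ := huniq ω (M.W c (ω 0) (ω c)) hω.1
    ⟨by rw [hg, sub_zero],
      fun a ha => by rw [tendsto_nhds_unique (hJ a ha) (hJ c hc), sub_self, sub_zero],
      by rw [hω.2, sub_self]⟩
  have hJc := hJ c hc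
  rw [hIs] at hJc
  rw [hωs] at hlim
  have hmax := ((hlim.sub_const ωstar).norm).max ((hJc.sub_const Istar).abs)
  rw [sub_self, sub_self, norm_zero, abs_zero, max_self] at hmax
  exact (ge_of_tendsto' hmax fun n => hfar (φ n)).not_gt hε

end PerturbedSystem

/-- Lemma B.6: properties of `r ↦ dist(ω*, r)`: it vanishes at `0`,
is non-decreasing, and tends to `0` as `r → 0⁺`. -/
theorem statement_13 {K : ℕ} [NeZero K] (M : Bandit K)
    (ωstar : Fin K → ℝ) (Istar : ℝ)
    (hstar_nonneg : ∀ a, 0 ≤ ωstar a)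
    (hstar : PsiZero M ωstar Istar (fun _ => 0))
    (hstar_uniq : ∀ (ω : Fin K → ℝ) (I : ℝ), (∀ a, 0 ≤ ω a) →
      PsiZero M ω I (fun _ => 0) → ω = ωstar ∧ I = Istar) :
    distFn M ωstar Istar 0 = 0 ∧
    (∀ r s : ℝ, 0 ≤ r → r ≤ s → distFn M ωstar Istar r ≤ distFn M ωstar Istar s) ∧
    Filter.Tendsto (distFn M ωstar Istar) (nhdsWithin 0 (Set.Ioi 0)) (nhds 0) := by
  have hzero_mem : ∀ r : ℝ, 0 ≤ r → (0 : ℝ) ∈ {v : ℝ | ∃ (ω : Fin K → ℝ) (I : ℝ) (η : Fin K → ℝ),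
      (∀ a, 0 ≤ ω a) ∧ (∀ a, |η a| ≤ r) ∧ PsiZero M ω I η ∧
      v = max ‖ω - ωstar‖ |I - Istar|} := fun r hr =>
    ⟨ωstar, Istar, fun _ => 0, hstar_nonneg, fun _ => by simpa using hr, hstar, by simp⟩
  refine ⟨?_, fun r s hr hrs => ?_, ?_⟩
  · refine IsGreatest.csSup_eq ⟨hzero_mem 0 le_rfl, ?_⟩
    rintro _ ⟨ω, I, η, hω, hη, hΨ, rfl⟩
    obtain rfl : η = fun _ => 0 := funext fun a => abs_nonpos_iff.1 (hη a)
    obtain ⟨rfl, rfl⟩ := hstar_uniq ω I hω hΨ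
    simp
  · refine csSup_le_csSup (bddAbove_perturbed M ωstar Istar s) ⟨0, hzero_mem r hr⟩ ?_
    rintro _ ⟨ω, I, η, hω, hη, hΨ, rfl⟩
    exact ⟨ω, I, η, hω, fun a => (hη a).trans hrs, hΨ, rfl⟩
  · rw [Metric.tendsto_nhds]
    intro ε hε
    obtain ⟨ρ₁, hρ₁, h₁⟩ := exists_forall_perturbed_of_zero hstar_uniq (half_pos hε)
    obtain ⟨ρ₂, hρ₂, h₂⟩ := exists_forall_perturbed_of_pos hstar_uniq (half_pos hε)
    filter_upwards [Ioo_mem_nhdsGT (lt_min hρ₁ hρ₂)] with r hr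
    have hr₁ : r < ρ₁ := hr.2.trans_le (min_le_left _ _)
    have hr₂ : r < ρ₂ := hr.2.trans_le (min_le_right _ _)
    have hnonneg : 0 ≤ distFn M ωstar Istar r :=
      le_csSup (bddAbove_perturbed M ωstar Istar r) (hzero_mem r hr.1.le)
    rw [Real.dist_0_eq_abs, abs_of_nonneg hnonneg]
    refine (csSup_le ⟨0, hzero_mem r hr.1.le⟩ ?_).trans_lt (half_lt_self hε)
    rintro _ ⟨ω, I, η, hω, hη, hΨ, rfl⟩
    rcases (hω 0).eq_or_lt' with h0 | h0
    · exact (h₁ ω I η hω h0 (fun a => (hη a).trans_lt hr₁) hΨ).le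
    · exact (h₂ ω I η hω h0 (fun a => (hη a).trans_lt hr₂) hΨ).le
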